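/- For every η > 0, n, m ∈ ℕ and x, y ∈ ℝ, the kernel W(n, m, η, x, y) := ∫_ℝ e^{−i η ξ y} H_{m,η}(ξ + x/2) H_{n,η}(ξ − x/2) dξ is smooth in (x, y) and satisfies (m − n) W(n, m, η, x, y) = i (x ∂_y − y ∂_x) W(n, m, η, x, y). -/

import Mathlib

open Complex

/-- The Hermite functions: `H 0 = π^{-1/4} e^{-x²/2}` and `H n = (2^n n!)^{-1/2} (-d/dx + x)^n H 0`. -/
noncomputable def hermiteFun (n : ℕ) : ℝ → ℝ := fun x =>
  ((2 ^ n * n.factorial : ℝ) ^ (-(1 : ℝ) / 2)) *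
    ((fun f : ℝ → ℝ => fun t => -deriv f t + t * f t)^[n]
      (fun t => Real.pi ^ (-(1 : ℝ) / 4) * Real.exp (-(t ^ 2) / 2))) x

/-- The rescaled Hermite function `H_{n,η}(x) = η^{1/4} H_n(η^{1/2} x)`. -/
noncomputable def hermiteScaled (n : ℕ) (η : ℝ) : ℝ → ℝ := fun x =>
  η ^ ((1 : ℝ) / 4) * hermiteFun n (η ^ ((1 : ℝ) / 2) * x)

/-- The Fourier kernel `W(n,m,η,x,y) = ∫ e^{−iηξy} H_{m,η}(ξ+x/2) H_{n,η}(ξ−x/2) dξ`. -/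
noncomputable def Wker (n m : ℕ) (η x y : ℝ) : ℂ :=
  ∫ ξ : ℝ, Complex.exp (-(I * η * ξ * y)) *
    (hermiteScaled m η (ξ + x / 2) : ℂ) * (hermiteScaled n η (ξ - x / 2) : ℂ)

/-!
For Schwartz functions `f`, `g` let `A(f, g) = ∫ exp (-iκξy) f(ξ + x/2) g(ξ - x/2) dξ`, and let `X`
and `D` be multiplication by the variable and differentiation. Since
`(ξ + x/2) - (ξ - x/2) = x`, and by integration by parts,

  `A(Xf, g) - A(f, Xg) = x A(f, g)`,  `A(Df, g) + A(f, Dg) = iκy A(f, g)`,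

while differentiation under the integral sign turns `∂_x A` and `∂_y A` into
`(A(Df, g) - A(f, Dg)) / 2` and `-iκ/2 (A(Xf, g) + A(f, Xg))`. This gives smoothness, and for the
harmonic oscillator `L = κ²X² - D²` it gives
`A(Lf, g) - A(f, Lg) = 2κ i (x ∂_y - y ∂_x) A(f, g)`. The kernel `W` is `A(f, g)` with `κ = η` and
`f`, `g` the rescaled Hermite functions of index `m`, `n`, eigenfunctions of `L` with eigenvalues
`(2m + 1)η`, `(2n + 1)η`.
-/

open MeasureTheory Filter
open scoped SchwartzMap ContDiff Polynomial

theorem contDiff_uncurry_succ_of_hasDerivAt {𝕜 F : Type*} [NontriviallyNormedField 𝕜]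
    [IsRCLikeNormedField 𝕜] [NormedAddCommGroup F] [NormedSpace 𝕜 F] {f f₁ f₂ : 𝕜 → 𝕜 → F} {n : ℕ}
    (hf₁ : ∀ x y, HasDerivAt (fun t => f t y) (f₁ x y) x)
    (hf₂ : ∀ x y, HasDerivAt (fun t => f x t) (f₂ x y) y)
    (h₁ : ContDiff 𝕜 n (fun z : 𝕜 × 𝕜 => f₁ z.1 z.2))
    (h₂ : ContDiff 𝕜 n (fun z : 𝕜 × 𝕜 => f₂ z.1 z.2)) :
    ContDiff 𝕜 (n + 1) (fun z : 𝕜 × 𝕜 => f z.1 z.2) := by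
  let L := ContinuousLinearMap.smulRightL 𝕜 𝕜 F 1
  have hL₁ : ContDiff 𝕜 n (fun z : 𝕜 × 𝕜 => L (f₁ z.1 z.2)) := L.contDiff.comp h₁
  have hL₂ : ContDiff 𝕜 n (fun z : 𝕜 × 𝕜 => L (f₂ z.1 z.2)) := L.contDiff.comp h₂
  refine contDiff_succ_iff_hasFDerivAt.2
    ⟨fun z => (L (f₁ z.1 z.2)).coprod (L (f₂ z.1 z.2)), ?_, fun z => ?_⟩
  · exact (ContinuousLinearMap.coprodEquivL 𝕜).contDiff.comp (hL₁.prodMk hL₂)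
  · exact (hasStrictFDerivAt_uncurry_coprod
      (f₁ := fun x y => L (f₁ x y)) (f₂ := fun x y => L (f₂ x y))
      (.of_forall fun w => (hf₁ w.1 w.2).hasFDerivAt)
      (.of_forall fun w => (hf₂ w.1 w.2).hasFDerivAt)
      hL₁.continuous.continuousAt hL₂.continuous.continuousAt).hasFDerivAt

theorem exists_norm_schwartz_le_mul_inv_one_add_sq {F : Type*} [NormedAddCommGroup F]
    [NormedSpace ℝ F] (f : 𝓢(ℝ, F)) : ∃ C, 0 ≤ C ∧ ∀ t, ‖f t‖ ≤ C * (1 + t ^ 2)⁻¹ := by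
  let C₀ := SchwartzMap.seminorm ℝ 0 0 f
  let C₂ := SchwartzMap.seminorm ℝ 2 0 f
  refine ⟨C₀ + C₂, by positivity, fun t => ?_⟩
  have h₀ : ‖f t‖ ≤ C₀ := f.norm_le_seminorm ℝ t
  have h₂ : ‖t‖ ^ 2 * ‖f t‖ ≤ C₂ := f.norm_pow_mul_le_seminorm ℝ 2 t
  rw [Real.norm_eq_abs, sq_abs] at h₂
  rw [← div_eq_mul_inv, le_div_iff₀ (by positivity)]
  linarith

theorem hasDerivAt_eval_mul_cexp_neg_mul_sq (b : ℂ) (p : ℂ[X]) (x : ℝ) :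
    HasDerivAt (fun t : ℝ => p.eval (t : ℂ) * cexp (-b * t ^ 2))
      ((p.derivative - Polynomial.C (2 * b) * Polynomial.X * p).eval (x : ℂ) *
        cexp (-b * x ^ 2)) x := by
  have hexp : HasDerivAt (fun z : ℂ => cexp (-b * z ^ 2))
      (cexp (-b * x ^ 2) * (-b * (2 * x))) x := by
    simpa using ((hasDerivAt_pow 2 (x : ℂ)).const_mul (-b)).cexp
  refine ((p.hasDerivAt (x : ℂ)).mul hexp).comp_ofReal.congr_deriv ?_
  simp only [Polynomial.eval_sub, Polynomial.eval_mul, Polynomial.eval_C, Polynomial.eval_X]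
  ring

theorem exists_iteratedDeriv_cexp_neg_mul_sq_eq (b : ℂ) (n : ℕ) :
    ∃ p : ℂ[X], iteratedDeriv n (fun t : ℝ => cexp (-b * t ^ 2)) =
      fun t : ℝ => p.eval (t : ℂ) * cexp (-b * t ^ 2) := by
  induction n with
  | zero => exact ⟨1, by simp⟩
  | succ n ih =>
    obtain ⟨p, hp⟩ := ih
    refine ⟨p.derivative - Polynomial.C (2 * b) * Polynomial.X * p, ?_⟩
    rw [iteratedDeriv_succ, hp]
    exact funext fun t => (hasDerivAt_eval_mul_cexp_neg_mul_sq b p t).deriv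

theorem exists_abs_pow_mul_exp_neg_mul_sq_le {a : ℝ} (ha : 0 < a) (k : ℕ) :
    ∃ C, ∀ x : ℝ, |x| ^ k * Real.exp (-a * x ^ 2) ≤ C := by
  refine ⟨1 + k.factorial / a ^ k, fun x => ?_⟩
  have hexp : Real.exp (-a * x ^ 2) * Real.exp (a * x ^ 2) = 1 := by
    rw [← Real.exp_add]; simp
  have hpow : |x| ^ k ≤ 1 + (x ^ 2) ^ k := by
    rw [← sq_abs, ← pow_mul, mul_comm, pow_mul]
    nlinarith [sq_nonneg (|x| ^ k - 1)]
  have htaylor : (x ^ 2) ^ k ≤ k.factorial / a ^ k * Real.exp (a * x ^ 2) := by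
    have := Real.pow_div_factorial_le_exp (a * x ^ 2) (by positivity) k
    rw [div_le_iff₀ (by positivity), mul_pow] at this
    rw [div_mul_eq_mul_div, le_div_iff₀ (by positivity)]
    linarith
  calc |x| ^ k * Real.exp (-a * x ^ 2)
      ≤ (1 + k.factorial / a ^ k * Real.exp (a * x ^ 2)) * Real.exp (-a * x ^ 2) := by
        gcongr; exact hpow.trans (by gcongr)
    _ = Real.exp (-a * x ^ 2) + k.factorial / a ^ k := by
        linear_combination (k.factorial / a ^ k) * hexp
    _ ≤ 1 + k.factorial / a ^ k := by
        gcongr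
        exact Real.exp_le_one_iff.2 (by nlinarith [sq_nonneg x])

theorem exists_norm_eval_mul_cexp_neg_mul_sq_le {b : ℂ} (hb : 0 < b.re) (p : ℂ[X]) :
    ∃ C, ∀ x : ℝ, ‖p.eval (x : ℂ) * cexp (-b * x ^ 2)‖ ≤ C := by
  induction p using Polynomial.induction_on' with
  | add p q hp hq =>
    obtain ⟨C, hC⟩ := hp
    obtain ⟨D, hD⟩ := hq
    refine ⟨C + D, fun x => ?_⟩
    rw [Polynomial.eval_add, add_mul]
    exact norm_add_le_of_le (hC x) (hD x)
  | monomial k a =>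
    obtain ⟨C, hC⟩ := exists_abs_pow_mul_exp_neg_mul_sq_le hb k
    refine ⟨‖a‖ * C, fun x => ?_⟩
    rw [Polynomial.eval_monomial, norm_mul, norm_cexp_neg_mul_sq, norm_mul, norm_pow,
      norm_real, Real.norm_eq_abs, mul_assoc]
    gcongr
    exact hC x

/-- The Gaussian `x ↦ exp (-b x²)`, `Re b > 0`, as a Schwartz function. -/
noncomputable def gaussianSchwartz (b : ℂ) (hb : 0 < b.re) : 𝓢(ℝ, ℂ) where
  toFun x := cexp (-b * x ^ 2)
  smooth' := (contDiff_const.mul (ofRealCLM.contDiff.pow 2)).cexp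
  decay' k n := by
    obtain ⟨p, hp⟩ := exists_iteratedDeriv_cexp_neg_mul_sq_eq b n
    obtain ⟨C, hC⟩ := exists_norm_eval_mul_cexp_neg_mul_sq_le hb (Polynomial.X ^ k * p)
    refine ⟨C, fun x => ?_⟩
    rw [norm_iteratedFDeriv_eq_norm_iteratedDeriv, hp]
    simpa [mul_assoc] using hC x

theorem gaussianSchwartz_apply (b : ℂ) (hb : 0 < b.re) (x : ℝ) :
    gaussianSchwartz b hb x = cexp (-b * x ^ 2) := rfl

/-- The position operator `X`, multiplication of Schwartz functions by the variable. -/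
noncomputable def positionCLM : 𝓢(ℝ, ℂ) →L[ℂ] 𝓢(ℝ, ℂ) :=
  SchwartzMap.smulLeftCLM ℂ Complex.ofReal

local notation "𝒟" => SchwartzMap.derivCLM ℂ ℂ

theorem positionCLM_apply (f : 𝓢(ℝ, ℂ)) (x : ℝ) : positionCLM f x = x * f x :=
  SchwartzMap.smulLeftCLM_apply_apply Function.Complex.hasTemperateGrowth_ofReal f x

theorem derivCLM_positionCLM (f : 𝓢(ℝ, ℂ)) :
    𝒟 (positionCLM f) = positionCLM (𝒟 f) + f := by
  ext x
  have hf : (positionCLM f : ℝ → ℂ) = fun t : ℝ => (t : ℂ) * f t := funext (positionCLM_apply f)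
  have := ((hasDerivAt_id x).ofReal_comp.mul (f.hasDerivAt x)).deriv
  rw [SchwartzMap.derivCLM_apply, hf, add_apply, positionCLM_apply,
    SchwartzMap.derivCLM_apply]
  refine this.trans ?_
  simp only [ofReal_one, one_mul, id_eq]
  ring

/-- The harmonic oscillator `κ² X² - d²/dx²`, of which rescaled Hermite functions are the
eigenfunctions when `κ = η`. -/
noncomputable def oscillator (κ : ℂ) : 𝓢(ℝ, ℂ) →L[ℂ] 𝓢(ℝ, ℂ) :=
  κ ^ 2 • positionCLM ^ 2 - 𝒟 ^ 2

/-- The creation operator `κ X - d/dx`, which raises eigenvalues of `oscillator κ` by `2κ`. -/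
noncomputable def creation (κ : ℂ) : 𝓢(ℝ, ℂ) →L[ℂ] 𝓢(ℝ, ℂ) :=
  κ • positionCLM - 𝒟

theorem oscillator_apply (κ : ℂ) (f : 𝓢(ℝ, ℂ)) :
    oscillator κ f = κ ^ 2 • positionCLM (positionCLM f) - 𝒟 (𝒟 f) := by
  simp [oscillator, pow_two]

theorem creation_apply (κ : ℂ) (f : 𝓢(ℝ, ℂ)) :
    creation κ f = κ • positionCLM f - 𝒟 f := rfl

theorem oscillator_creation (κ : ℂ) (f : 𝓢(ℝ, ℂ)) :
    oscillator κ (creation κ f) = creation κ (oscillator κ f) + (2 * κ) • creation κ f := by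
  simp only [oscillator_apply, creation_apply, map_sub, map_smul, map_add, derivCLM_positionCLM]
  module

theorem derivCLM_gaussianSchwartz (b : ℂ) (hb : 0 < b.re) :
    𝒟 (gaussianSchwartz b hb) = -(2 * b) • positionCLM (gaussianSchwartz b hb) := by
  ext x
  have := (hasDerivAt_eval_mul_cexp_neg_mul_sq b 1 x).deriv
  simp only [Polynomial.eval_one, one_mul] at this
  rw [SchwartzMap.derivCLM_apply, smul_apply, positionCLM_apply,
    gaussianSchwartz_apply]
  refine this.trans ?_
  simp only [Polynomial.derivative_one, zero_sub, Polynomial.eval_neg, Polynomial.eval_mul,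
    Polynomial.eval_C, Polynomial.eval_X, mul_one, smul_eq_mul]
  ring

theorem oscillator_gaussianSchwartz (b : ℂ) (hb : 0 < b.re) :
    oscillator (2 * b) (gaussianSchwartz b hb) = (2 * b) • gaussianSchwartz b hb := by
  simp only [oscillator_apply, derivCLM_gaussianSchwartz, map_smul, derivCLM_positionCLM]
  module

theorem oscillator_iterate_creation {κ μ : ℂ} {f : 𝓢(ℝ, ℂ)} (hf : oscillator κ f = μ • f) (n : ℕ) :
    oscillator κ ((creation κ)^[n] f) = (μ + 2 * n * κ) • (creation κ)^[n] f := by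
  induction n with
  | zero => simpa using hf
  | succ n ih =>
    rw [Function.iterate_succ_apply', oscillator_creation, ih, map_smul]
    push_cast
    module

theorem inv_one_add_sq_mul_inv_one_add_sq_le (x ξ : ℝ) :
    (1 + (ξ + x / 2) ^ 2)⁻¹ * (1 + (ξ - x / 2) ^ 2)⁻¹ ≤ (1 + ξ ^ 2)⁻¹ := by
  rw [← mul_inv]
  gcongr
  nlinarith [sq_nonneg x, sq_nonneg ξ, sq_nonneg ((ξ + x / 2) * (ξ - x / 2))]

section CrossAmbiguity

variable (κ : ℝ) (f g : 𝓢(ℝ, ℂ)) (x y : ℝ)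

/-- The integrand of the cross-ambiguity function `crossAmbiguity`. -/
noncomputable def ambiguityIntegrand (ξ : ℝ) : ℂ :=
  cexp (-(I * κ * ξ * y)) * f (ξ + x / 2) * g (ξ - x / 2)

theorem continuous_ambiguityIntegrand : Continuous (ambiguityIntegrand κ f g x y) := by
  unfold ambiguityIntegrand
  fun_prop

theorem continuous_ambiguityIntegrand_prod (ξ : ℝ) :
    Continuous (fun z : ℝ × ℝ => ambiguityIntegrand κ f g z.1 z.2 ξ) := by
  unfold ambiguityIntegrand
  fun_prop

theorem exists_norm_ambiguityIntegrand_le :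
    ∃ C, ∀ x y ξ, ‖ambiguityIntegrand κ f g x y ξ‖ ≤ C * (1 + ξ ^ 2)⁻¹ := by
  obtain ⟨C, hC₀, hC⟩ := exists_norm_schwartz_le_mul_inv_one_add_sq f
  obtain ⟨D, hD₀, hD⟩ := exists_norm_schwartz_le_mul_inv_one_add_sq g
  refine ⟨C * D, fun x y ξ => ?_⟩
  have hphase : ‖cexp (-(I * κ * ξ * y))‖ = 1 := by simp [norm_exp]
  calc ‖ambiguityIntegrand κ f g x y ξ‖
      = ‖f (ξ + x / 2)‖ * ‖g (ξ - x / 2)‖ := by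
        rw [ambiguityIntegrand, norm_mul, norm_mul, hphase, one_mul]
    _ ≤ C * (1 + (ξ + x / 2) ^ 2)⁻¹ * (D * (1 + (ξ - x / 2) ^ 2)⁻¹) := by
        gcongr
        exacts [hC _, hD _]
    _ = C * D * ((1 + (ξ + x / 2) ^ 2)⁻¹ * (1 + (ξ - x / 2) ^ 2)⁻¹) := by ring
    _ ≤ C * D * (1 + ξ ^ 2)⁻¹ := by
        gcongr
        exact inv_one_add_sq_mul_inv_one_add_sq_le x ξ

theorem integrable_ambiguityIntegrand : Integrable (ambiguityIntegrand κ f g x y) := by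
  obtain ⟨C, hC⟩ := exists_norm_ambiguityIntegrand_le κ f g
  exact (integrable_inv_one_add_sq.const_mul C).mono'
    (continuous_ambiguityIntegrand κ f g x y).aestronglyMeasurable (.of_forall (hC x y))

/-- The cross-ambiguity function at `(x, y)` with the phase `y` scaled by `κ`. The second function
is not conjugated, so it is bilinear in the two functions. -/
noncomputable def crossAmbiguity : 𝓢(ℝ, ℂ) →ₗ[ℂ] 𝓢(ℝ, ℂ) →ₗ[ℂ] ℂ :=
  LinearMap.mk₂ ℂ (fun f g => ∫ ξ, ambiguityIntegrand κ f g x y ξ)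
    (fun f f' g => by
      rw [← integral_add (integrable_ambiguityIntegrand ..) (integrable_ambiguityIntegrand ..)]
      simp [ambiguityIntegrand, mul_add, add_mul])
    (fun c f g => by
      rw [← integral_smul]
      simp [ambiguityIntegrand, mul_left_comm, mul_assoc])
    (fun f g g' => by
      rw [← integral_add (integrable_ambiguityIntegrand ..) (integrable_ambiguityIntegrand ..)]
      simp [ambiguityIntegrand, mul_add])
    (fun c f g => by
      rw [← integral_smul]
      simp [ambiguityIntegrand, mul_left_comm])

theorem crossAmbiguity_apply :
    crossAmbiguity κ x y f g = ∫ ξ, ambiguityIntegrand κ f g x y ξ := rfl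

theorem continuous_crossAmbiguity :
    Continuous (fun z : ℝ × ℝ => crossAmbiguity κ z.1 z.2 f g) := by
  obtain ⟨C, hC⟩ := exists_norm_ambiguityIntegrand_le κ f g
  exact continuous_of_dominated (fun z => (integrable_ambiguityIntegrand κ f g z.1 z.2).1)
    (fun z => .of_forall (hC z.1 z.2)) (integrable_inv_one_add_sq.const_mul C)
    (.of_forall (continuous_ambiguityIntegrand_prod κ f g))

theorem crossAmbiguity_positionCLM_sub :
    crossAmbiguity κ x y (positionCLM f) g - crossAmbiguity κ x y f (positionCLM g) =
      x * crossAmbiguity κ x y f g := by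
  simp only [crossAmbiguity_apply]
  rw [← integral_sub (integrable_ambiguityIntegrand ..) (integrable_ambiguityIntegrand ..),
    ← integral_const_mul]
  congr 1 with ξ
  simp only [ambiguityIntegrand, positionCLM_apply]
  push_cast
  ring

theorem hasDerivAt_ambiguityIntegrand_left (ξ : ℝ) :
    HasDerivAt (fun t => ambiguityIntegrand κ f g t y ξ)
      ((ambiguityIntegrand κ (𝒟 f) g x y ξ - ambiguityIntegrand κ f (𝒟 g) x y ξ) / 2) x := by
  have hf : HasDerivAt (fun t => f (ξ + t / 2)) ((1 / 2 : ℝ) • deriv f (ξ + x / 2)) x :=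
    (f.hasDerivAt _).scomp x (((hasDerivAt_id x).div_const 2).const_add ξ)
  have hg : HasDerivAt (fun t => g (ξ - t / 2)) (-(1 / 2 : ℝ) • deriv g (ξ - x / 2)) x :=
    (g.hasDerivAt _).scomp x (((hasDerivAt_id x).div_const 2).const_sub ξ)
  refine ((hf.const_mul (cexp (-(I * κ * ξ * y)))).mul hg).congr_deriv ?_
  simp only [ambiguityIntegrand, SchwartzMap.derivCLM_apply, real_smul]
  push_cast
  ring

theorem hasDerivAt_ambiguityIntegrand_right (ξ : ℝ) :
    HasDerivAt (fun t => ambiguityIntegrand κ f g x t ξ)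
      (-(I * κ / 2) * (ambiguityIntegrand κ (positionCLM f) g x y ξ +
        ambiguityIntegrand κ f (positionCLM g) x y ξ)) y := by
  have hphase : HasDerivAt (fun t : ℝ => cexp (-(I * κ * ξ * t)))
      (cexp (-(I * κ * ξ * y)) * -(I * κ * ξ)) y := by
    simpa using ((hasDerivAt_id y).ofReal_comp.const_mul (I * κ * ξ)).neg.cexp
  refine ((hphase.mul_const (f (ξ + x / 2))).mul_const (g (ξ - x / 2))).congr_deriv ?_
  simp only [ambiguityIntegrand, positionCLM_apply]
  push_cast
  ring

theorem hasDerivAt_ambiguityIntegrand (ξ : ℝ) :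
    HasDerivAt (ambiguityIntegrand κ f g x y)
      (ambiguityIntegrand κ (𝒟 f) g x y ξ + ambiguityIntegrand κ f (𝒟 g) x y ξ -
        I * κ * y * ambiguityIntegrand κ f g x y ξ) ξ := by
  have hphase : HasDerivAt (fun t : ℝ => cexp (-(I * κ * t * y)))
      (cexp (-(I * κ * ξ * y)) * -(I * κ * y)) ξ := by
    simpa using (((hasDerivAt_id ξ).ofReal_comp.const_mul (I * κ)).mul_const (y : ℂ)).neg.cexp
  have hf := (f.hasDerivAt (ξ + x / 2)).comp_add_const ξ (x / 2)
  have hg := (g.hasDerivAt (ξ - x / 2)).comp_sub_const ξ (x / 2)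
  refine ((hphase.mul hf).mul hg).congr_deriv ?_
  simp only [ambiguityIntegrand, SchwartzMap.derivCLM_apply, Pi.mul_apply]
  ring

theorem crossAmbiguity_derivCLM_add :
    crossAmbiguity κ x y (𝒟 f) g + crossAmbiguity κ x y f (𝒟 g) =
      I * κ * y * crossAmbiguity κ x y f g := by
  have hDf := integrable_ambiguityIntegrand κ (𝒟 f) g x y
  have hDg := integrable_ambiguityIntegrand κ f (𝒟 g) x y
  have h := (integrable_ambiguityIntegrand κ f g x y).const_mul (I * κ * y)
  have hzero := integral_eq_zero_of_hasDerivAt_of_integrable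
    (hasDerivAt_ambiguityIntegrand κ f g x y) ((hDf.fun_add hDg).sub h)
    (integrable_ambiguityIntegrand κ f g x y)
  rw [integral_sub (hDf.fun_add hDg) h, integral_add hDf hDg, integral_const_mul] at hzero
  exact sub_eq_zero.1 hzero

theorem hasDerivAt_crossAmbiguity_left :
    HasDerivAt (fun t => crossAmbiguity κ t y f g)
      ((crossAmbiguity κ x y (𝒟 f) g - crossAmbiguity κ x y f (𝒟 g)) / 2) x := by
  obtain ⟨C, hC⟩ := exists_norm_ambiguityIntegrand_le κ (𝒟 f) g
  obtain ⟨D, hD⟩ := exists_norm_ambiguityIntegrand_le κ f (𝒟 g)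
  have hDf := integrable_ambiguityIntegrand κ (𝒟 f) g x y
  have hDg := integrable_ambiguityIntegrand κ f (𝒟 g) x y
  have hbound (ξ t : ℝ) :
      ‖(ambiguityIntegrand κ (𝒟 f) g t y ξ - ambiguityIntegrand κ f (𝒟 g) t y ξ) / 2‖ ≤
        (C + D) / 2 * (1 + ξ ^ 2)⁻¹ := by
    rw [norm_div, Complex.norm_ofNat]
    linarith [norm_sub_le_of_le (hC t y ξ) (hD t y ξ)]
  have key := (hasDerivAt_integral_of_dominated_loc_of_deriv_le (𝕜 := ℝ) univ_mem
    (.of_forall fun t => (integrable_ambiguityIntegrand κ f g t y).1)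
    (integrable_ambiguityIntegrand κ f g x y) ((hDf.sub hDg).div_const 2).1
    (.of_forall fun ξ t _ => hbound ξ t) (integrable_inv_one_add_sq.const_mul _)
    (.of_forall fun ξ t _ => hasDerivAt_ambiguityIntegrand_left κ f g t y ξ)).2
  rwa [integral_div, integral_sub hDf hDg] at key

theorem hasDerivAt_crossAmbiguity_right :
    HasDerivAt (fun t => crossAmbiguity κ x t f g)
      (-(I * κ / 2) * (crossAmbiguity κ x y (positionCLM f) g +
        crossAmbiguity κ x y f (positionCLM g))) y := by
  obtain ⟨C, hC⟩ := exists_norm_ambiguityIntegrand_le κ (positionCLM f) g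
  obtain ⟨D, hD⟩ := exists_norm_ambiguityIntegrand_le κ f (positionCLM g)
  have hXf := integrable_ambiguityIntegrand κ (positionCLM f) g x y
  have hXg := integrable_ambiguityIntegrand κ f (positionCLM g) x y
  have hbound (ξ t : ℝ) :
      ‖-(I * κ / 2) * (ambiguityIntegrand κ (positionCLM f) g x t ξ +
        ambiguityIntegrand κ f (positionCLM g) x t ξ)‖ ≤
        ‖-(I * κ / 2)‖ * (C + D) * (1 + ξ ^ 2)⁻¹ := by
    rw [norm_mul, mul_assoc, add_mul]
    gcongr
    exact norm_add_le_of_le (hC x t ξ) (hD x t ξ)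
  have key := (hasDerivAt_integral_of_dominated_loc_of_deriv_le (𝕜 := ℝ) univ_mem
    (.of_forall fun t => (integrable_ambiguityIntegrand κ f g x t).1)
    (integrable_ambiguityIntegrand κ f g x y) ((hXf.add hXg).const_mul _).1
    (.of_forall fun ξ t _ => hbound ξ t) (integrable_inv_one_add_sq.const_mul _)
    (.of_forall fun ξ t _ => hasDerivAt_ambiguityIntegrand_right κ f g x t ξ)).2
  rwa [integral_const_mul, integral_add hXf hXg] at key

theorem contDiff_crossAmbiguity_nat (n : ℕ) :
    ContDiff ℝ n (fun z : ℝ × ℝ => crossAmbiguity κ z.1 z.2 f g) := by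
  induction n generalizing f g with
  | zero => exact contDiff_zero.2 (continuous_crossAmbiguity κ f g)
  | succ n ih =>
    exact contDiff_uncurry_succ_of_hasDerivAt
      (hasDerivAt_crossAmbiguity_left κ f g) (hasDerivAt_crossAmbiguity_right κ f g)
      (((ih (𝒟 f) g).sub (ih f (𝒟 g))).div_const 2)
      (contDiff_const.mul ((ih (positionCLM f) g).add (ih f (positionCLM g))))

theorem contDiff_crossAmbiguity :
    ContDiff ℝ ∞ (fun z : ℝ × ℝ => crossAmbiguity κ z.1 z.2 f g) :=
  contDiff_infty.2 (contDiff_crossAmbiguity_nat κ f g)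

theorem crossAmbiguity_positionCLM_positionCLM_sub :
    κ * (crossAmbiguity κ x y (positionCLM (positionCLM f)) g -
      crossAmbiguity κ x y f (positionCLM (positionCLM g))) =
      2 * I * x * deriv (fun t => crossAmbiguity κ x t f g) y := by
  rw [(hasDerivAt_crossAmbiguity_right κ f g x y).deriv]
  linear_combination κ * crossAmbiguity_positionCLM_sub κ (positionCLM f) g x y +
    κ * crossAmbiguity_positionCLM_sub κ f (positionCLM g) x y +
    κ * x * (crossAmbiguity κ x y (positionCLM f) g +
      crossAmbiguity κ x y f (positionCLM g)) * I_sq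

theorem crossAmbiguity_derivCLM_derivCLM_sub :
    crossAmbiguity κ x y (𝒟 (𝒟 f)) g - crossAmbiguity κ x y f (𝒟 (𝒟 g)) =
      2 * I * κ * y * deriv (fun t => crossAmbiguity κ t y f g) x := by
  rw [(hasDerivAt_crossAmbiguity_left κ f g x y).deriv]
  linear_combination crossAmbiguity_derivCLM_add κ (𝒟 f) g x y -
    crossAmbiguity_derivCLM_add κ f (𝒟 g) x y

theorem crossAmbiguity_oscillator_sub :
    crossAmbiguity κ x y (oscillator κ f) g - crossAmbiguity κ x y f (oscillator κ g) =
      2 * κ * (I * (x * deriv (fun t => crossAmbiguity κ x t f g) y -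
        y * deriv (fun t => crossAmbiguity κ t y f g) x)) := by
  simp only [oscillator_apply, map_sub, map_smul, LinearMap.sub_apply, LinearMap.smul_apply,
    smul_eq_mul]
  linear_combination κ * crossAmbiguity_positionCLM_positionCLM_sub κ f g x y -
    crossAmbiguity_derivCLM_derivCLM_sub κ f g x y

end CrossAmbiguity

/-- The raising operator `-d/dx + x` of `hermiteFun`, on all functions since `deriv` is total. -/
noncomputable def hermiteRaising (F : ℝ → ℝ) : ℝ → ℝ := fun t => -deriv F t + t * F t

theorem hermiteRaising_comp_mul {s : ℝ} (hs : s ≠ 0) {F : ℝ → ℝ} {f : 𝓢(ℝ, ℂ)}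
    (hF : ∀ t, (F (s * t) : ℂ) = f t) (t : ℝ) :
    (hermiteRaising F (s * t) : ℂ) = ((s : ℂ)⁻¹ • creation (s ^ 2) f) t := by
  have hre : (fun t => F (s * t)) = fun t => (f t).re := by
    ext t; rw [← hF, ofReal_re]
  have hdiff : DifferentiableAt ℝ (fun t => F (s * t)) t := by
    rw [hre]; exact reCLM.differentiableAt.comp t f.differentiableAt
  have hderiv : deriv f t = ((s * deriv F (s * t) : ℝ) : ℂ) := by
    rw [← smul_eq_mul, ← deriv_comp_mul_left, ← hdiff.hasDerivAt.ofReal_comp.deriv]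
    simp only [hF]
  have hs' : (s : ℂ) ≠ 0 := ofReal_ne_zero.2 hs
  rw [smul_apply, creation_apply, sub_apply, smul_apply, positionCLM_apply,
    SchwartzMap.derivCLM_apply, hderiv, ← hF, hermiteRaising]
  push_cast
  simp only [smul_eq_mul]
  field_simp
  ring

theorem iterate_hermiteRaising_comp_mul {s : ℝ} (hs : s ≠ 0) {F : ℝ → ℝ} {f : 𝓢(ℝ, ℂ)}
    (hF : ∀ t, (F (s * t) : ℂ) = f t) (n : ℕ) (t : ℝ) :
    (hermiteRaising^[n] F (s * t) : ℂ) = ((s : ℂ)⁻¹ ^ n • (creation (s ^ 2))^[n] f) t := by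
  induction n generalizing t with
  | zero => simpa using hF t
  | succ n ih =>
    rw [Function.iterate_succ_apply', Function.iterate_succ_apply',
      hermiteRaising_comp_mul hs ih, map_smul, smul_smul, pow_succ' _ n]

/-- The dilated ground state `hermiteFun 0 (√η x)` as a Schwartz function; unlike
`hermiteScaled 0 η` it lacks the factor `η^{1/4}`. -/
noncomputable def hermiteGround (η : ℝ) (hη : 0 < η) : 𝓢(ℝ, ℂ) :=
  ((Real.pi ^ (-(1 : ℝ) / 4) : ℝ) : ℂ) • gaussianSchwartz (η / 2) (by simpa using hη)

theorem oscillator_hermiteGround {η : ℝ} (hη : 0 < η) :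
    oscillator η (hermiteGround η hη) = (η : ℂ) • hermiteGround η hη := by
  have hgauss := oscillator_gaussianSchwartz (η / 2) (by simpa using hη)
  rw [mul_div_cancel₀ _ two_ne_zero] at hgauss
  rw [hermiteGround, map_smul, hgauss, smul_comm]

/-- The rescaled Hermite function `hermiteScaled n η` as a Schwartz function. The factor `s⁻ⁿ`,
`s = √η`, appears because dilation by `s` turns the raising operator into `s⁻¹ • creation η`. -/
noncomputable def hermiteSchwartz (n : ℕ) (η : ℝ) (hη : 0 < η) : 𝓢(ℝ, ℂ) :=
  ((η ^ ((1 : ℝ) / 4) * (2 ^ n * n.factorial : ℝ) ^ (-(1 : ℝ) / 2) : ℝ) : ℂ) •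
    ((η ^ ((1 : ℝ) / 2) : ℝ) : ℂ)⁻¹ ^ n • (creation η)^[n] (hermiteGround η hη)

theorem hermiteSchwartz_apply (n : ℕ) {η : ℝ} (hη : 0 < η) (x : ℝ) :
    hermiteSchwartz n η hη x = hermiteScaled n η x := by
  let s : ℝ := η ^ ((1 : ℝ) / 2)
  let ground : ℝ → ℝ := fun t => Real.pi ^ (-(1 : ℝ) / 4) * Real.exp (-(t ^ 2) / 2)
  have hs : s ≠ 0 := (Real.rpow_pos_of_pos hη _).ne'
  have hs_sq : (s : ℂ) ^ 2 = η := by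
    rw [← ofReal_pow, ← Real.rpow_natCast, ← Real.rpow_mul hη.le]
    norm_num
  have hground (t : ℝ) : (ground (s * t) : ℂ) = hermiteGround η hη t := by
    simp only [ground, hermiteGround, smul_apply, gaussianSchwartz_apply, smul_eq_mul, ← hs_sq]
    push_cast
    ring_nf
  have hraise := iterate_hermiteRaising_comp_mul hs hground n x
  rw [hs_sq] at hraise
  have hscaled : hermiteScaled n η x =
      η ^ ((1 : ℝ) / 4) * (2 ^ n * n.factorial : ℝ) ^ (-(1 : ℝ) / 2) *
        hermiteRaising^[n] ground (s * x) := (mul_assoc _ _ _).symm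
  rw [hscaled, ofReal_mul, hraise, hermiteSchwartz, smul_apply, smul_eq_mul]

theorem oscillator_hermiteSchwartz (n : ℕ) {η : ℝ} (hη : 0 < η) :
    oscillator η (hermiteSchwartz n η hη) = ((2 * n + 1) * η : ℂ) • hermiteSchwartz n η hη := by
  simp only [hermiteSchwartz, map_smul, oscillator_iterate_creation (oscillator_hermiteGround hη)]
  module

theorem Wker_eq_crossAmbiguity (n m : ℕ) {η : ℝ} (hη : 0 < η) (x y : ℝ) :
    Wker n m η x y =
      crossAmbiguity η x y (hermiteSchwartz m η hη) (hermiteSchwartz n η hη) := by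
  simp only [Wker, crossAmbiguity_apply, ambiguityIntegrand, hermiteSchwartz_apply]

/-- `W` is smooth in `(x,y)` and satisfies `(m−n) W = i (x ∂_y − y ∂_x) W`. -/
theorem Wker_rotation (η : ℝ) (hη : 0 < η) (n m : ℕ) :
    ContDiff ℝ (⊤ : ℕ∞) (fun Z : ℝ × ℝ => Wker n m η Z.1 Z.2) ∧
    ∀ x y : ℝ,
      ((m : ℂ) - (n : ℂ)) * Wker n m η x y =
        I * ((x : ℂ) * deriv (fun t : ℝ => Wker n m η x t) y -
          (y : ℂ) * deriv (fun t : ℝ => Wker n m η t y) x) := by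
  simp only [Wker_eq_crossAmbiguity n m hη]
  refine ⟨contDiff_crossAmbiguity η _ _, fun x y => ?_⟩
  have hrotation := crossAmbiguity_oscillator_sub η
    (hermiteSchwartz m η hη) (hermiteSchwartz n η hη) x y
  simp only [oscillator_hermiteSchwartz, map_smul, LinearMap.smul_apply, smul_eq_mul] at hrotation
  have hη_ne : (2 * η : ℂ) ≠ 0 := by simpa using hη.ne'
  refine mul_left_cancel₀ hη_ne ?_
  linear_combination hrotation
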